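/- (Theorem 1, EVSI formula.) Let M ≥ 1, n ≥ 1, k > 0, α_0,...,α_M > 0 with α = Σ_{d=0}^M α_d, c_1 = (1/α)Σ_{d=0}^M d·α_d, and c_2 = (1/α)Σ_{d=0}^M d²·α_d. Let T ∼ Dirichlet(α_0,...,α_M), and conditionally on T = t let (n_0,...,n_M) ∼ Multinomial(n, t) with Z = (1/n)Σ_{d=0}^M d·n_d and posterior Bayes action a_X = (α·c_1 + n·Z)/(α+n). Define the expected value of sample information V_n(π) = E_T[Σ_{d=0}^M T_d·k·(d − c_1)²] − E_T E_{(n_0,...,n_M)|T}[Σ_{d=0}^M T_d·k·(d − a_X)²]. Then V_n(π) = k·n·(c_2 − c_1²)/((n+α)(1+α)). -/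

import Mathlib

open MeasureTheory

/-! The inner multinomial expectation is evaluated first. For fixed `t` in the simplex, the risk of
an action is a quadratic polynomial in the action whose coefficients are the first two moments
`m₁ = ∑ d t_d` and `m₂ = ∑ d² t_d` of the data distribution. The posterior Bayes action is affine in
the sample sum `∑ d n_d`, whose first two multinomial moments come from differentiating the
generating function `(∑ t_d X^d)^n` at `1` (`multinomial_moments`). Hence both risks are linear
combinations of `m₂`, `m₁²`, `m₁` and `1` (`quadratic_risk`, `multinomial_risk`).

Their Dirichlet expectations need only `E[T_i]` and `E[T_i T_j]`. Multiplying the density by `t_i`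
shifts the parameter `α_i` by one, so these follow from Dirichlet's integral
`∫ ∏ t_d^(β_d - 1) = ∏ Γ(β_d) / Γ(∑ β_d)` (`dirichlet_integral`) and `Γ(x + 1) = x Γ(x)`. Dirichlet's
integral is proved by induction on the dimension with Tonelli's theorem and the beta integral. What
remains is an identity of rational functions. -/

/-! ### The Dirichlet integral -/

/-- Euler's beta integral on `(0, s)`, obtained from the beta density by the substitution
`y ↦ s⁻¹ * y`. -/
lemma lintegral_beta_scaled {b B s : ℝ} (hb : 0 < b) (hB : 0 < B) (hs : 0 < s) :
    ∫⁻ y in Set.Ioo 0 s, ENNReal.ofReal (y ^ (b - 1) * (s - y) ^ (B - 1)) =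
      ENNReal.ofReal (s ^ (b + B - 1) * (Real.Gamma b * Real.Gamma B / Real.Gamma (b + B))) := by
  have hβ := ProbabilityTheory.beta_pos hb hB
  set K : ℝ := 1 / ProbabilityTheory.beta b B * (s ^ (b - 1))⁻¹ * (s ^ (B - 1))⁻¹ with hK
  have hK0 : 0 < K := by positivity
  have h1 := ProbabilityTheory.lintegral_betaPDF_eq_one hb hB
  rw [← Real.smul_map_volume_mul_left (a := s⁻¹) (by positivity), lintegral_smul_measure,
    lintegral_map (by unfold ProbabilityTheory.betaPDF; fun_prop) (by fun_prop)] at h1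
  have h2 : ∀ y, ProbabilityTheory.betaPDF b B (s⁻¹ * y) =
      (Set.Ioo 0 s).indicator (fun y => ENNReal.ofReal K *
        ENNReal.ofReal (y ^ (b - 1) * (s - y) ^ (B - 1))) y := by
    intro y
    by_cases hy : y ∈ Set.Ioo 0 s
    · rw [Set.indicator_of_mem hy, ← ENNReal.ofReal_mul hK0.le]
      have hlt : s⁻¹ * y < 1 := by rw [inv_mul_lt_iff₀ hs]; simpa using hy.2
      rw [ProbabilityTheory.betaPDF_of_pos_lt_one (mul_pos (by positivity) hy.1) hlt]
      have e : 1 - s⁻¹ * y = s⁻¹ * (s - y) := by field_simp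
      rw [e, Real.mul_rpow (by positivity) hy.1.le,
        Real.mul_rpow (by positivity) (sub_nonneg.2 hy.2.le), Real.inv_rpow hs.le,
        Real.inv_rpow hs.le, hK]
      congr 1; ring
    · rw [Set.indicator_of_notMem hy]
      rcases le_or_gt y 0 with h | h
      · exact ProbabilityTheory.betaPDF_eq_zero_of_nonpos
          (mul_nonpos_of_nonneg_of_nonpos (by positivity) h)
      · refine ProbabilityTheory.betaPDF_eq_zero_of_one_le ?_
        have : s ≤ y := not_lt.1 fun h' => hy ⟨h, h'⟩
        rw [le_inv_mul_iff₀ hs]; simpa using this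
  simp_rw [h2] at h1
  rw [lintegral_indicator measurableSet_Ioo, lintegral_const_mul _ (by fun_prop), smul_eq_mul,
    ← mul_assoc, ← ENNReal.ofReal_mul (abs_nonneg _), mul_comm] at h1
  rw [ENNReal.eq_inv_of_mul_eq_one_left h1, ← ENNReal.ofReal_inv_of_pos (by positivity),
    abs_of_pos (by positivity), hK]
  congr 1
  have e1 : s ^ (b + B - 1) = s * (s ^ (b - 1) * s ^ (B - 1)) := by
    rw [← Real.rpow_add hs]
    nth_rewrite 2 [← Real.rpow_one s]
    rw [← Real.rpow_add hs]; congr 1; ring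
  rw [e1]
  unfold ProbabilityTheory.beta at *
  field_simp

/-- The corner `{x ≥ 0, ∑ x ≤ s}` of the orthant of `ℝ^M`. For `s = 1` it parameterizes the simplex
in `ℝ^(M+1)` by all barycentric coordinates but the zeroth. -/
def solid (M : ℕ) (s : ℝ) : Set (Fin M → ℝ) := {x | (∀ j, 0 ≤ x j) ∧ ∑ j, x j ≤ s}

lemma measurableSet_solid (M : ℕ) (s : ℝ) : MeasurableSet (solid M s) := by
  have : solid M s = (⋂ j, {x | 0 ≤ x j}) ∩ {x | ∑ j, x j ≤ s} := by
    ext x; simp [solid]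
  rw [this]
  exact (MeasurableSet.iInter fun j => measurableSet_le (by fun_prop) (by fun_prop)).inter
    (measurableSet_le (by fun_prop) (by fun_prop))

/-- Dirichlet's integral over a corner of arbitrary size `s`. The fibre over the first coordinate `y`
is a corner of size `s - y`, so the induction on the dimension needs the general `s`, and its
step is the beta integral. -/
lemma lintegral_dirichlet (b₀ : ℝ) (hb₀ : 0 < b₀) : ∀ (M : ℕ) (b : Fin M → ℝ) (_ : ∀ j, 0 < b j)
    (s : ℝ) (_ : 0 < s),
    ∫⁻ x in solid M s, ENNReal.ofReal ((s - ∑ j, x j) ^ (b₀ - 1) * ∏ j, x j ^ (b j - 1)) =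
      ENNReal.ofReal (s ^ (b₀ + ∑ j, b j - 1) *
        (Real.Gamma b₀ * (∏ j, Real.Gamma (b j)) / Real.Gamma (b₀ + ∑ j, b j))) := by
  intro M
  induction M with
  | zero =>
    intro b _ s hs
    have : solid 0 s = Set.univ := by ext x; simp [solid, hs.le]
    rw [this, setLIntegral_univ, lintegral_unique]
    simp [(Real.Gamma_pos_of_pos hb₀).ne', volume_pi]
  | succ M ih =>
    intro b hb s hs
    set B := b₀ + ∑ j : Fin M, b j.succ with hBdef
    have hB : 0 < B := add_pos_of_pos_of_nonneg hb₀ (Finset.sum_nonneg fun j _ => (hb _).le)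
    set G := Real.Gamma b₀ * (∏ j : Fin M, Real.Gamma (b j.succ)) / Real.Gamma B with hG
    have hG0 : 0 ≤ G := div_nonneg (mul_nonneg (Real.Gamma_pos_of_pos hb₀).le
      (Finset.prod_nonneg fun j _ => (Real.Gamma_pos_of_pos (hb _)).le))
      (Real.Gamma_pos_of_pos hB).le
    let F : (Fin (M + 1) → ℝ) → ENNReal := (solid (M + 1) s).indicator fun x =>
      ENNReal.ofReal ((s - ∑ j, x j) ^ (b₀ - 1) * ∏ j, x j ^ (b j - 1))
    have hF : Measurable F := by
      refine Measurable.indicator ?_ (measurableSet_solid _ _)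
      fun_prop
    have hmp := (volume_preserving_piFinSuccAbove (fun _ : Fin (M + 1) => ℝ) 0).symm
    rw [← lintegral_indicator (measurableSet_solid _ _)]
    change ∫⁻ x, F x = _
    rw [← hmp.lintegral_comp hF, Measure.volume_eq_prod,
      lintegral_prod (fun z => F ((MeasurableEquiv.piFinSuccAbove (fun _ => ℝ) 0).symm z))
        (hF.comp hmp.measurable).aemeasurable]
    have hcons : ∀ (y : ℝ) (x : Fin M → ℝ),
        (MeasurableEquiv.piFinSuccAbove (fun _ : Fin (M + 1) => ℝ) 0).symm (y, x) =
          (Fin.cons y x : Fin (M + 1) → ℝ) := by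
      intro y x
      simp [MeasurableEquiv.piFinSuccAbove, Fin.insertNthEquiv]
    simp_rw [hcons]
    have hmem : ∀ (y : ℝ) (x : Fin M → ℝ),
        (Fin.cons y x : Fin (M + 1) → ℝ) ∈ solid (M + 1) s ↔ 0 ≤ y ∧ x ∈ solid M (s - y) := by
      intro y x
      simp only [solid, Set.mem_ofPred_eq, Fin.forall_fin_succ, Fin.cons_zero, Fin.cons_succ,
        Fin.sum_univ_succ, and_assoc, le_sub_iff_add_le']
    -- the endpoints `y = 0` and `y = s` form a null set
    have hfib : ∀ᵐ y : ℝ, ∫⁻ x, F (Fin.cons y x : Fin (M + 1) → ℝ) =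
        (Set.Ioo 0 s).indicator (fun y => ENNReal.ofReal G *
          ENNReal.ofReal (y ^ (b 0 - 1) * (s - y) ^ (B - 1))) y := by
      filter_upwards [Measure.ae_ne volume (0 : ℝ), Measure.ae_ne volume s] with y hy0 hys
      by_cases hy : y ∈ Set.Ioo 0 s
      · rw [Set.indicator_of_mem hy]
        have hy1 : (0 : ℝ) ≤ y ^ (b 0 - 1) := Real.rpow_nonneg hy.1.le _
        have : ∀ x : Fin M → ℝ, F (Fin.cons y x : Fin (M + 1) → ℝ) =
            (solid M (s - y)).indicator (fun x => ENNReal.ofReal (y ^ (b 0 - 1)) *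
              ENNReal.ofReal ((s - y - ∑ j, x j) ^ (b₀ - 1) * ∏ j, x j ^ (b j.succ - 1))) x := by
          intro x
          by_cases hx : x ∈ solid M (s - y)
          · rw [Set.indicator_of_mem hx, ← ENNReal.ofReal_mul hy1]
            simp only [F]
            rw [Set.indicator_of_mem ((hmem y x).2 ⟨hy.1.le, hx⟩)]
            simp only [Fin.sum_univ_succ, Fin.prod_univ_succ, Fin.cons_zero, Fin.cons_succ,
              sub_sub]
            congr 1; ring
          · rw [Set.indicator_of_notMem hx]
            exact Set.indicator_of_notMem (fun h => hx ((hmem y x).1 h).2) _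
        simp_rw [this]
        rw [lintegral_indicator (measurableSet_solid _ _), lintegral_const_mul _ (by fun_prop),
          ih (fun j => b j.succ) (fun j => hb _) (s - y) (sub_pos.2 hy.2), ← hBdef, ← hG,
          ← ENNReal.ofReal_mul hy1, ← ENNReal.ofReal_mul hG0]
        congr 1; ring
      · rw [Set.indicator_of_notMem hy]
        have : ∀ x : Fin M → ℝ, F (Fin.cons y x : Fin (M + 1) → ℝ) = 0 := by
          intro x
          refine Set.indicator_of_notMem (fun h => hy ?_) _
          obtain ⟨h0, hx0, hxs⟩ := (hmem y x).1 h
          have hle : 0 ≤ s - y := (Finset.sum_nonneg fun j _ => hx0 j).trans hxs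
          exact ⟨lt_of_le_of_ne h0 (Ne.symm hy0), lt_of_le_of_ne (sub_nonneg.1 hle) hys⟩
        simp [this]
    rw [lintegral_congr_ae hfib, lintegral_indicator measurableSet_Ioo,
      lintegral_const_mul _ (by fun_prop), lintegral_beta_scaled (hb 0) hB hs,
      ← ENNReal.ofReal_mul hG0]
    have e : b₀ + ∑ j, b j = b 0 + B := by rw [Fin.sum_univ_succ, hBdef]; ring
    rw [e, Fin.prod_univ_succ, hG]
    have := (Real.Gamma_pos_of_pos hB).ne'
    congr 1; field_simp

/-- The barycentric coordinates `(1 - ∑ x, x₁, …, x_M)` of a point `x`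
of the corner of size one. -/
def bary {M : ℕ} (x : Fin M → ℝ) : Fin (M + 1) → ℝ := Fin.cons (1 - ∑ j, x j) x

lemma bary_nonneg {M : ℕ} {x : Fin M → ℝ} (hx : x ∈ solid M 1) (d : Fin (M + 1)) :
    0 ≤ bary x d := by
  refine Fin.cases ?_ (fun j => ?_) d
  · simpa [bary] using hx.2
  · simpa [bary] using hx.1 j

lemma sum_bary {M : ℕ} (x : Fin M → ℝ) : ∑ d, bary x d = 1 := by
  simp [bary, Fin.sum_univ_succ]

lemma measurable_bary {M : ℕ} (d : Fin (M + 1)) : Measurable fun x : Fin M → ℝ => bary x d := by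
  refine Fin.cases ?_ (fun j => ?_) d
  · simp only [bary, Fin.cons_zero]; fun_prop
  · simp only [bary, Fin.cons_succ]; fun_prop

/-- The multivariate beta function `∏ Γ(β_d) / Γ(∑ β_d)`, the reciprocal of the normalizing constant
of the Dirichlet density with parameters `β`. -/
noncomputable def dirichletConst {M : ℕ} (β : Fin (M + 1) → ℝ) : ℝ :=
  (∏ d, Real.Gamma (β d)) / Real.Gamma (∑ d, β d)

lemma dirichletConst_pos {M : ℕ} {β : Fin (M + 1) → ℝ} (hβ : ∀ d, 0 < β d) :
    0 < dirichletConst β :=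
  div_pos (Finset.prod_pos fun d _ => Real.Gamma_pos_of_pos (hβ d))
    (Real.Gamma_pos_of_pos (Finset.sum_pos (fun d _ => hβ d) Finset.univ_nonempty))

lemma dirichlet_integral {M : ℕ} {β : Fin (M + 1) → ℝ} (hβ : ∀ d, 0 < β d) :
    IntegrableOn (fun x : Fin M → ℝ => ∏ d, bary x d ^ (β d - 1)) (solid M 1) ∧
      ∫ x in solid M 1, ∏ d, bary x d ^ (β d - 1) = dirichletConst β := by
  have hm : Measurable fun x : Fin M → ℝ => ∏ d, bary x d ^ (β d - 1) :=
    Finset.measurable_prod _ fun d _ => (measurable_bary d).pow_const _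
  have h0 : 0 ≤ᵐ[volume.restrict (solid M 1)] fun x : Fin M → ℝ => ∏ d, bary x d ^ (β d - 1) :=
    (ae_restrict_iff' (measurableSet_solid _ _)).2 (.of_forall fun x hx =>
      Finset.prod_nonneg fun d _ => Real.rpow_nonneg (bary_nonneg hx d) _)
  have hl : ∫⁻ x in solid M 1, ENNReal.ofReal (∏ d, bary x d ^ (β d - 1)) =
      ENNReal.ofReal (dirichletConst β) := by
    have := lintegral_dirichlet (β 0) (hβ 0) M (fun j => β j.succ) (fun j => hβ _) 1 one_pos
    simpa [dirichletConst, bary, Fin.prod_univ_succ, Fin.sum_univ_succ] using this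
  refine ⟨⟨hm.aestronglyMeasurable, ?_⟩, ?_⟩
  · rw [hasFiniteIntegral_iff_ofReal h0, hl]; exact ENNReal.ofReal_lt_top
  · rw [integral_eq_lintegral_of_nonneg_ae h0 hm.aestronglyMeasurable, hl,
      ENNReal.toReal_ofReal (dirichletConst_pos hβ).le]

/-! ### Moments of the Dirichlet distribution -/

/-- Multiplying the unnormalized Dirichlet density by `t i` raises the `i`-th parameter by one. This
holds on the boundary `t i = 0` too, because `β i ≠ 0`. -/
lemma prod_rpow_add_single {M : ℕ} {β : Fin (M + 1) → ℝ} (hβ : ∀ d, 0 < β d)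
    {t : Fin (M + 1) → ℝ} (ht : ∀ d, 0 ≤ t d) (i : Fin (M + 1)) :
    ∏ d, t d ^ ((β + Pi.single i 1 : Fin (M + 1) → ℝ) d - 1) = t i * ∏ d, t d ^ (β d - 1) := by
  rw [← Finset.mul_prod_erase _ _ (Finset.mem_univ i),
    ← Finset.mul_prod_erase _ (fun d => t d ^ (β d - 1)) (Finset.mem_univ i), ← mul_assoc]
  congr 1
  · have : (β + Pi.single i 1 : Fin (M + 1) → ℝ) i - 1 = 1 + (β i - 1) := by simp
    rw [this, Real.rpow_add' (ht i) (by have := hβ i; linarith), Real.rpow_one]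
  · refine Finset.prod_congr rfl fun d hd => ?_
    simp [Finset.ne_of_mem_erase hd]

lemma add_single_pos {M : ℕ} {β : Fin (M + 1) → ℝ} (hβ : ∀ d, 0 < β d) (i d : Fin (M + 1)) :
    0 < (β + Pi.single i 1 : Fin (M + 1) → ℝ) d :=
  add_pos_of_pos_of_nonneg (hβ d) (by rw [Pi.single_apply]; split_ifs <;> simp)

lemma dirichletConst_add_single {M : ℕ} {β : Fin (M + 1) → ℝ} (hβ : ∀ d, 0 < β d)
    (i : Fin (M + 1)) :
    dirichletConst (β + Pi.single i 1) = β i / (∑ d, β d) * dirichletConst β := by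
  have hS : 0 < ∑ d, β d := Finset.sum_pos (fun d _ => hβ d) Finset.univ_nonempty
  have e1 : ∑ d, (β + Pi.single i 1 : Fin (M + 1) → ℝ) d = ∑ d, β d + 1 := by
    simp [Finset.sum_add_distrib]
  have e2 : ∏ d, Real.Gamma ((β + Pi.single i 1 : Fin (M + 1) → ℝ) d) =
      β i * ∏ d, Real.Gamma (β d) := by
    rw [← Finset.mul_prod_erase _ _ (Finset.mem_univ i),
      ← Finset.mul_prod_erase _ (fun d => Real.Gamma (β d)) (Finset.mem_univ i), ← mul_assoc]
    congr 1
    · simp [Real.Gamma_add_one (hβ i).ne']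
    · refine Finset.prod_congr rfl fun d hd => ?_
      simp [Finset.ne_of_mem_erase hd]
  rw [dirichletConst, dirichletConst, e1, e2, Real.Gamma_add_one hS.ne']
  have := (Real.Gamma_pos_of_pos hS).ne'
  field_simp

lemma dirichlet_moment_one {M : ℕ} {β : Fin (M + 1) → ℝ} (hβ : ∀ d, 0 < β d)
    (i : Fin (M + 1)) :
    IntegrableOn (fun x : Fin M → ℝ => bary x i * ∏ d, bary x d ^ (β d - 1)) (solid M 1) ∧
      ∫ x in solid M 1, bary x i * ∏ d, bary x d ^ (β d - 1) =
        β i / (∑ d, β d) * dirichletConst β := by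
  have h := dirichlet_integral (add_single_pos hβ i)
  have e : Set.EqOn (fun x : Fin M → ℝ =>
      ∏ d, bary x d ^ ((β + Pi.single i 1 : Fin (M + 1) → ℝ) d - 1))
      (fun x => bary x i * ∏ d, bary x d ^ (β d - 1)) (solid M 1) :=
    fun x hx => prod_rpow_add_single hβ (bary_nonneg hx) i
  rw [setIntegral_congr_fun (measurableSet_solid _ _) e,
    integrableOn_congr_fun e (measurableSet_solid _ _), dirichletConst_add_single hβ] at h
  exact h

lemma dirichlet_moment_two {M : ℕ} {β : Fin (M + 1) → ℝ} (hβ : ∀ d, 0 < β d)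
    (i j : Fin (M + 1)) :
    IntegrableOn (fun x : Fin M → ℝ => bary x i * (bary x j * ∏ d, bary x d ^ (β d - 1)))
      (solid M 1) ∧
      ∫ x in solid M 1, bary x i * (bary x j * ∏ d, bary x d ^ (β d - 1)) =
        (β i + if i = j then 1 else 0) / (∑ d, β d + 1) *
          (β j / (∑ d, β d) * dirichletConst β) := by
  have h := dirichlet_moment_one (add_single_pos hβ j) i
  have e : Set.EqOn (fun x : Fin M → ℝ => bary x i *
      ∏ d, bary x d ^ ((β + Pi.single j 1 : Fin (M + 1) → ℝ) d - 1))
      (fun x => bary x i * (bary x j * ∏ d, bary x d ^ (β d - 1))) (solid M 1) :=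
    fun x hx => congrArg (bary x i * ·) (prod_rpow_add_single hβ (bary_nonneg hx) j)
  rw [setIntegral_congr_fun (measurableSet_solid _ _) e,
    integrableOn_congr_fun e (measurableSet_solid _ _), dirichletConst_add_single hβ] at h
  have e1 : ∑ d, (β + Pi.single j 1 : Fin (M + 1) → ℝ) d = ∑ d, β d + 1 := by
    simp [Finset.sum_add_distrib]
  rw [e1] at h
  simpa [Pi.single_apply] using h

/-! ### Moments of the multinomial distribution -/

open Polynomial in
lemma eval_derivative_sum {ι : Type*} (S : Finset ι) (w : ι → ℝ) (N : ι → ℕ) :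
    (derivative (∑ i ∈ S, C (w i) * X ^ N i)).eval 1 = ∑ i ∈ S, w i * N i := by
  simp only [derivative_sum, derivative_C_mul_X_pow, eval_finsetSum]
  exact Finset.sum_congr rfl fun i _ => by simp

open Polynomial in
/-- The operator `X * d/dX` multiplies `X ^ N` by `N`, so applying it before the derivative produces
the second moment of the exponents directly. -/
lemma eval_derivative_X_mul_derivative_sum {ι : Type*} (S : Finset ι) (w : ι → ℝ) (N : ι → ℕ) :
    (derivative (X * derivative (∑ i ∈ S, C (w i) * X ^ N i))).eval 1 =
      ∑ i ∈ S, w i * (N i : ℝ) ^ 2 := by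
  have : X * derivative (∑ i ∈ S, C (w i) * X ^ N i) = ∑ i ∈ S, C (w i * N i) * X ^ N i := by
    rw [derivative_sum, Finset.mul_sum]
    refine Finset.sum_congr rfl fun i _ => ?_
    rw [derivative_C_mul_X_pow]
    rcases N i with _ | k
    · simp
    · rw [Nat.add_sub_cancel, pow_succ]; ring
  rw [this, eval_derivative_sum]
  exact Finset.sum_congr rfl fun i _ => by ring

open Polynomial in
/-- Total mass and first two moments of `∑ v d * c d` under the multinomial distribution, read off at
`1` from the generating function `(∑ t d * X ^ v d) ^ n` and its derivatives. -/
lemma multinomial_moments {M : ℕ} (n : ℕ) (v : Fin (M + 1) → ℕ) (t : Fin (M + 1) → ℝ)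
    (ht : ∑ d, t d = 1) :
    (∑ c ∈ Finset.Nat.antidiagonalTuple (M + 1) n,
        (Nat.multinomial Finset.univ c : ℝ) * ∏ d, t d ^ c d = 1) ∧
    (∑ c ∈ Finset.Nat.antidiagonalTuple (M + 1) n,
        ((Nat.multinomial Finset.univ c : ℝ) * ∏ d, t d ^ c d) * ∑ d, (v d : ℝ) * c d =
      n * ∑ d, (v d : ℝ) * t d) ∧
    (∑ c ∈ Finset.Nat.antidiagonalTuple (M + 1) n,
        ((Nat.multinomial Finset.univ c : ℝ) * ∏ d, t d ^ c d) * (∑ d, (v d : ℝ) * c d) ^ 2 =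
      n * (n - 1) * (∑ d, (v d : ℝ) * t d) ^ 2 + n * ∑ d, (v d : ℝ) ^ 2 * t d) := by
  let P : ℝ[X] := ∑ d, C (t d) * X ^ v d
  let w : (Fin (M + 1) → ℕ) → ℝ := fun c => (Nat.multinomial Finset.univ c : ℝ) * ∏ d, t d ^ c d
  let N : (Fin (M + 1) → ℕ) → ℕ := fun c => ∑ d, v d * c d
  have hP : P ^ n = ∑ c ∈ Finset.Nat.antidiagonalTuple (M + 1) n, C (w c) * X ^ N c := by
    rw [Finset.sum_pow_eq_sum_piAntidiag, Finset.piAntidiag_univ_fin_eq_antidiagonalTuple]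
    refine Finset.sum_congr rfl fun c _ => ?_
    simp only [mul_pow, Finset.prod_mul_distrib, w, N, map_mul, map_prod, map_pow, ← pow_mul,
      Finset.prod_pow_eq_pow_sum, map_natCast, mul_assoc]
  have hN : ∀ c, (N c : ℝ) = ∑ d, (v d : ℝ) * c d := fun c => by simp [N]
  have P1 : P.eval 1 = 1 := by simp [P, eval_finsetSum, ht]
  have dP1 : (derivative P).eval 1 = ∑ d, (v d : ℝ) * t d := by
    rw [eval_derivative_sum]; exact Finset.sum_congr rfl fun d _ => mul_comm _ _
  have ddP1 : (derivative (X * derivative P)).eval 1 = ∑ d, (v d : ℝ) ^ 2 * t d := by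
    rw [eval_derivative_X_mul_derivative_sum]; exact Finset.sum_congr rfl fun d _ => mul_comm _ _
  simp only [← hN]
  change ∑ c ∈ _, w c = 1 ∧ ∑ c ∈ _, w c * (N c : ℝ) = _ ∧ ∑ c ∈ _, w c * (N c : ℝ) ^ 2 = _
  rw [← eval_derivative_sum, ← eval_derivative_X_mul_derivative_sum, ← hP, ← dP1, ← ddP1]
  refine ⟨?_, ?_, ?_⟩
  · have := congrArg (eval 1) hP
    simpa [eval_finsetSum, P1] using this.symm
  · simp [derivative_pow, P1]
  · rcases n with _ | n
    · simp
    · simp [derivative_pow, P1, derivative_mul]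
      ring

/-! ### Risks as quadratic polynomials in the moments -/

/-- The first moment `∑ d, d * t d` of a weight vector on `{0, …, M}`. -/
noncomputable def momentOne {M : ℕ} (t : Fin (M + 1) → ℝ) : ℝ :=
  ∑ d : Fin (M + 1), ((d : ℕ) : ℝ) * t d

/-- The second moment `∑ d, d ^ 2 * t d` of a weight vector on `{0, …, M}`. -/
noncomputable def momentTwo {M : ℕ} (t : Fin (M + 1) → ℝ) : ℝ :=
  ∑ d : Fin (M + 1), ((d : ℕ) : ℝ) ^ 2 * t d

lemma quadratic_risk {M : ℕ} {t : Fin (M + 1) → ℝ} (ht : ∑ d, t d = 1) (k a : ℝ) :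
    ∑ d : Fin (M + 1), t d * (k * (((d : ℕ) : ℝ) - a) ^ 2) =
      k * (momentTwo t - 2 * a * momentOne t + a ^ 2) := by
  have : a ^ 2 = a ^ 2 * ∑ d, t d := by rw [ht, mul_one]
  rw [this, momentTwo, momentOne, Finset.mul_sum, Finset.mul_sum, ← Finset.sum_sub_distrib,
    ← Finset.sum_add_distrib, Finset.mul_sum]
  exact Finset.sum_congr rfl fun d _ => by ring

/-- The risk of the affine estimator `p + q * ∑ d * c d`, averaged over the multinomial sample `c`. -/
lemma multinomial_risk {M : ℕ} (n : ℕ) {t : Fin (M + 1) → ℝ} (ht : ∑ d, t d = 1) (k p q : ℝ) :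
    ∑ c ∈ Finset.Nat.antidiagonalTuple (M + 1) n,
        ((Nat.multinomial Finset.univ c : ℝ) * ∏ d, t d ^ c d) *
          ∑ d : Fin (M + 1), t d * (k * (((d : ℕ) : ℝ) -
            (p + q * ∑ e : Fin (M + 1), ((e : ℕ) : ℝ) * (c e : ℝ))) ^ 2) =
      k * ((1 + q ^ 2 * n) * momentTwo t + (q ^ 2 * (n * (n - 1)) - 2 * q * n) * momentOne t ^ 2 +
        (2 * p * q * n - 2 * p) * momentOne t + p ^ 2) := by
  obtain ⟨h0, h1, h2⟩ := multinomial_moments n (fun d => (d : ℕ)) t ht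
  simp only [quadratic_risk ht]
  set w : (Fin (M + 1) → ℕ) → ℝ := fun c => (Nat.multinomial Finset.univ c : ℝ) * ∏ d, t d ^ c d
  set L : (Fin (M + 1) → ℕ) → ℝ := fun c => ∑ e : Fin (M + 1), ((e : ℕ) : ℝ) * (c e : ℝ)
  -- expand the risk in powers of the sample sum `L c`
  change ∑ c ∈ _, w c = 1 at h0
  change ∑ c ∈ _, w c * L c = n * momentOne t at h1
  change ∑ c ∈ _, w c * L c ^ 2 = n * (n - 1) * momentOne t ^ 2 + n * momentTwo t at h2
  change ∑ c ∈ _, w c * (k * (momentTwo t - 2 * (p + q * L c) * momentOne t +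
    (p + q * L c) ^ 2)) = _
  have : ∀ c, w c * (k * (momentTwo t - 2 * (p + q * L c) * momentOne t + (p + q * L c) ^ 2)) =
      k * (momentTwo t - 2 * p * momentOne t + p ^ 2) * w c +
        k * (2 * p * q - 2 * q * momentOne t) * (w c * L c) +
        k * q ^ 2 * (w c * L c ^ 2) := fun c => by ring
  simp only [this, Finset.sum_add_distrib, ← Finset.mul_sum, h0, h1, h2]
  ring

/-- Dirichlet expectation of a polynomial in the first two moments of the random weight vector; `C` is
the normalizing constant. -/
lemma dirichlet_integral_quadratic {M : ℕ} {β : Fin (M + 1) → ℝ} (hβ : ∀ d, 0 < β d)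
    (C a b c e : ℝ) (hC : C * dirichletConst β = 1) :
    ∫ x in solid M 1, (C * ∏ d, bary x d ^ (β d - 1)) *
      (a * momentTwo (bary x) + b * momentOne (bary x) ^ 2 + c * momentOne (bary x) + e) =
      a * (momentTwo β / ∑ d, β d) +
        b * ((momentOne β ^ 2 + momentTwo β) / ((∑ d, β d) * (∑ d, β d + 1))) +
        c * (momentOne β / ∑ d, β d) + e := by
  have hS : 0 < ∑ d, β d := Finset.sum_pos (fun d _ => hβ d) Finset.univ_nonempty
  set S := ∑ d, β d with hSdef
  set K := dirichletConst β
  have h0 := dirichlet_integral hβ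
  have h1 := dirichlet_moment_one hβ
  have h2 := dirichlet_moment_two hβ
  let D : (Fin M → ℝ) → ℝ := fun x => ∏ d, bary x d ^ (β d - 1)
  have key : ∀ x : Fin M → ℝ, (C * ∏ d, bary x d ^ (β d - 1)) *
      (a * momentTwo (bary x) + b * momentOne (bary x) ^ 2 + c * momentOne (bary x) + e) =
      ((∑ d : Fin (M + 1), C * a * ((d : ℕ) : ℝ) ^ 2 * (bary x d * D x)) +
        (∑ i : Fin (M + 1), ∑ j : Fin (M + 1), C * b * (((i : ℕ) : ℝ) * ((j : ℕ) : ℝ)) *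
          (bary x i * (bary x j * D x))) +
        ∑ d : Fin (M + 1), C * c * ((d : ℕ) : ℝ) * (bary x d * D x)) + C * e * D x := by
    intro x
    have e1 : C * a * momentTwo (bary x) * D x =
        ∑ d : Fin (M + 1), C * a * ((d : ℕ) : ℝ) ^ 2 * (bary x d * D x) := by
      rw [momentTwo, Finset.mul_sum, Finset.sum_mul]; exact Finset.sum_congr rfl fun d _ => by ring
    have e2 : C * c * momentOne (bary x) * D x =
        ∑ d : Fin (M + 1), C * c * ((d : ℕ) : ℝ) * (bary x d * D x) := by
      rw [momentOne, Finset.mul_sum, Finset.sum_mul]; exact Finset.sum_congr rfl fun d _ => by ring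
    have e3 : C * b * momentOne (bary x) ^ 2 * D x = ∑ i : Fin (M + 1), ∑ j : Fin (M + 1),
        C * b * (((i : ℕ) : ℝ) * ((j : ℕ) : ℝ)) * (bary x i * (bary x j * D x)) := by
      rw [momentOne, pow_two, Finset.sum_mul_sum, Finset.mul_sum, Finset.sum_mul]
      refine Finset.sum_congr rfl fun i _ => ?_
      rw [Finset.mul_sum, Finset.sum_mul]
      exact Finset.sum_congr rfl fun d _ => by ring
    rw [← e1, ← e2, ← e3]
    change C * D x * _ = _
    ring
  simp only [key]
  have i1 : ∀ r : Fin (M + 1) → ℝ,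
      IntegrableOn (fun x => ∑ d, r d * (bary x d * D x)) (solid M 1) := fun r =>
    integrable_finsetSum _ fun d _ => (h1 d).1.const_mul _
  have i2 : IntegrableOn (fun x => ∑ i : Fin (M + 1), ∑ j : Fin (M + 1),
      C * b * (((i : ℕ) : ℝ) * ((j : ℕ) : ℝ)) * (bary x i * (bary x j * D x))) (solid M 1) :=
    integrable_finsetSum _ fun i _ => integrable_finsetSum _ fun j _ => (h2 i j).1.const_mul _
  have i0 : IntegrableOn (fun x => C * e * D x) (solid M 1) := h0.1.const_mul _
  have v1 : ∀ r : Fin (M + 1) → ℝ, ∫ x in solid M 1, ∑ d, r d * (bary x d * D x) =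
      ∑ d, r d * (β d / S * K) := by
    intro r
    rw [integral_finsetSum _ fun d _ => (h1 d).1.const_mul _]
    exact Finset.sum_congr rfl fun d _ => by rw [integral_const_mul, (h1 d).2]
  have v2 : ∫ x in solid M 1, ∑ i : Fin (M + 1), ∑ j : Fin (M + 1),
      C * b * (((i : ℕ) : ℝ) * ((j : ℕ) : ℝ)) * (bary x i * (bary x j * D x)) =
      ∑ i : Fin (M + 1), ∑ j : Fin (M + 1), C * b * (((i : ℕ) : ℝ) * ((j : ℕ) : ℝ)) *
        ((β i + if i = j then 1 else 0) / (S + 1) * (β j / S * K)) := by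
    rw [integral_finsetSum _ fun i _ => integrable_finsetSum _ fun j _ =>
      (h2 i j).1.const_mul _]
    refine Finset.sum_congr rfl fun i _ => ?_
    rw [integral_finsetSum _ fun j _ => (h2 i j).1.const_mul _]
    exact Finset.sum_congr rfl fun d _ => by rw [integral_const_mul, (h2 i d).2]
  have i1a := i1 fun d => C * a * ((d : ℕ) : ℝ) ^ 2
  have i1c := i1 fun d => C * c * ((d : ℕ) : ℝ)
  rw [integral_add _ i0, integral_add _ i1c, integral_add i1a i2, v1, v1, v2,
    integral_const_mul, h0.2]
  rotate_left
  · exact i1a.add i2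
  · exact (i1a.add i2).add i1c
  have f1 : ∑ d : Fin (M + 1), C * a * ((d : ℕ) : ℝ) ^ 2 * (β d / S * K) = a * (momentTwo β / S) := by
    rw [momentTwo, Finset.sum_div, Finset.mul_sum]
    refine Finset.sum_congr rfl fun d _ => ?_
    linear_combination (a * ((d : ℕ) : ℝ) ^ 2 * (β d / S)) * hC
  have f2 : ∑ d : Fin (M + 1), C * c * ((d : ℕ) : ℝ) * (β d / S * K) = c * (momentOne β / S) := by
    rw [momentOne, Finset.sum_div, Finset.mul_sum]
    refine Finset.sum_congr rfl fun d _ => ?_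
    linear_combination (c * ((d : ℕ) : ℝ) * (β d / S)) * hC
  have f3 : ∑ i : Fin (M + 1), ∑ j : Fin (M + 1), C * b * (((i : ℕ) : ℝ) * ((j : ℕ) : ℝ)) *
      ((β i + if i = j then 1 else 0) / (S + 1) * (β j / S * K)) =
      b * ((momentOne β ^ 2 + momentTwo β) / (S * (S + 1))) := by
    have g : momentOne β ^ 2 + momentTwo β = ∑ i : Fin (M + 1), ∑ j : Fin (M + 1),
        (((i : ℕ) : ℝ) * ((j : ℕ) : ℝ)) * ((β i + if i = j then 1 else 0) * β j) := by
      simp only [add_mul, mul_add, Finset.sum_add_distrib, ite_mul, one_mul, zero_mul, mul_ite,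
        mul_zero, Finset.sum_ite_eq, Finset.mem_univ, if_true]
      congr 1
      · rw [momentOne, pow_two, Finset.sum_mul_sum]
        exact Finset.sum_congr rfl fun i _ => Finset.sum_congr rfl fun j _ => by ring
      · exact Finset.sum_congr rfl fun i _ => by ring
    rw [g, Finset.sum_div, Finset.mul_sum]
    refine Finset.sum_congr rfl fun i _ => ?_
    rw [Finset.sum_div, Finset.mul_sum]
    refine Finset.sum_congr rfl fun j _ => ?_
    generalize (β i + if i = j then (1 : ℝ) else 0) = u
    field_simp
    linear_combination (b * ((i : ℕ) : ℝ) * ((j : ℕ) : ℝ) * u * β j) * hC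
  rw [f1, f2, f3]
  linear_combination e * hC

/-- Theorem 1, EVSI formula: with `T ∼ Dirichlet(α₀,…,α_M)` (density with
respect to Lebesgue measure on the simplex, parameterized by `(t₁,…,t_M)` with
`t₀ = 1 − ∑_{d=1}^M t_d`) and, conditionally on `T = t`,
`(n₀,…,n_M) ∼ Multinomial(n, t)` with `Z = (1/n)∑ d·n_d` and posterior Bayes action
`a_X = (α·c₁ + n·Z)/(α+n)`, the expected value of sample information
`V_n(π) = E_T[∑ d, T_d·k·(d − c₁)²] − E_T E_{X|T}[∑ d, T_d·k·(d − a_X)²]`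
equals `k·n·(c₂ − c₁²)/((n+α)(1+α))`. -/
theorem evsi_dirichlet_multinomial (M n : ℕ) (hM : 1 ≤ M) (hn : 1 ≤ n)
    (k : ℝ) (hk : 0 < k)
    (α : Fin (M + 1) → ℝ) (hα : ∀ d, 0 < α d)
    (A c1 c2 : ℝ) (hA : A = ∑ d, α d)
    (hc1 : c1 = (1 / A) * ∑ d : Fin (M + 1), ((d : ℕ) : ℝ) * α d)
    (hc2 : c2 = (1 / A) * ∑ d : Fin (M + 1), ((d : ℕ) : ℝ) ^ 2 * α d)
    (Z : (Fin (M + 1) → ℕ) → ℝ)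
    (hZ : ∀ c, Z c = (1 / (n : ℝ)) * ∑ d : Fin (M + 1), ((d : ℕ) : ℝ) * (c d : ℝ))
    (aX : (Fin (M + 1) → ℕ) → ℝ)
    (haX : ∀ c, aX c = (A * c1 + n * Z c) / (A + n)) :
    (∫ x in {x : Fin M → ℝ | (∀ j, 0 ≤ x j) ∧ ∑ j, x j ≤ 1},
        (∑ d : Fin (M + 1),
            (Fin.cons (1 - ∑ j, x j) x : Fin (M + 1) → ℝ) d *
              (k * (((d : ℕ) : ℝ) - c1) ^ 2)) *
          ((Real.Gamma A / ∏ d, Real.Gamma (α d)) *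
            ∏ d : Fin (M + 1),
              (Fin.cons (1 - ∑ j, x j) x : Fin (M + 1) → ℝ) d ^ (α d - 1)))
      - (∫ x in {x : Fin M → ℝ | (∀ j, 0 ≤ x j) ∧ ∑ j, x j ≤ 1},
          ((Real.Gamma A / ∏ d, Real.Gamma (α d)) *
              ∏ d : Fin (M + 1),
                (Fin.cons (1 - ∑ j, x j) x : Fin (M + 1) → ℝ) d ^ (α d - 1)) *
            ∑ c ∈ Finset.Nat.antidiagonalTuple (M + 1) n,
              ((Nat.multinomial Finset.univ c : ℝ) *
                  ∏ d : Fin (M + 1),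
                    (Fin.cons (1 - ∑ j, x j) x : Fin (M + 1) → ℝ) d ^ c d) *
                ∑ d : Fin (M + 1),
                  (Fin.cons (1 - ∑ j, x j) x : Fin (M + 1) → ℝ) d *
                    (k * (((d : ℕ) : ℝ) - aX c) ^ 2))
      = k * n * (c2 - c1 ^ 2) / ((n + A) * (1 + A)) := by
  have hS : 0 < A := hA ▸ Finset.sum_pos (fun d _ => hα d) Finset.univ_nonempty
  have hn0 : (0 : ℝ) < n := by exact_mod_cast hn
  have hC : (Real.Gamma A / ∏ d, Real.Gamma (α d)) * dirichletConst α = 1 := by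
    have h1 := (Real.Gamma_pos_of_pos hS).ne'
    have h2 : ∏ d, Real.Gamma (α d) ≠ 0 :=
      Finset.prod_ne_zero_iff.2 fun d _ => (Real.Gamma_pos_of_pos (hα d)).ne'
    rw [dirichletConst, ← hA]; field_simp
  set C := Real.Gamma A / ∏ d, Real.Gamma (α d)
  -- the posterior Bayes action is affine in the sample sum `∑ d * c d`
  have hX : ∀ c, aX c = A * c1 / (A + n) + 1 / (A + n) * ∑ d : Fin (M + 1),
      ((d : ℕ) : ℝ) * (c d : ℝ) := by
    intro c; rw [haX, hZ]; field_simp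
  have hl : momentOne α = A * c1 := by rw [hc1, momentOne]; field_simp
  have hs : momentTwo α = A * c2 := by rw [hc2, momentTwo]; field_simp
  have I1 := dirichlet_integral_quadratic hα C k 0 (-2 * k * c1) (k * c1 ^ 2) hC
  set p := A * c1 / (A + n) with hp
  set q := 1 / (A + n) with hq
  have I2 := dirichlet_integral_quadratic hα C (k * (1 + q ^ 2 * n))
    (k * (q ^ 2 * (n * (n - 1)) - 2 * q * n)) (k * (2 * p * q * n - 2 * p)) (k * p ^ 2) hC
  rw [← hA, hl, hs] at I1 I2
  change (∫ x in solid M 1, (∑ d : Fin (M + 1), bary x d * (k * (((d : ℕ) : ℝ) - c1) ^ 2)) *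
      (C * ∏ d, bary x d ^ (α d - 1))) - (∫ x in solid M 1, (C * ∏ d, bary x d ^ (α d - 1)) *
        ∑ c ∈ Finset.Nat.antidiagonalTuple (M + 1) n,
          ((Nat.multinomial Finset.univ c : ℝ) * ∏ d, bary x d ^ c d) *
            ∑ d : Fin (M + 1), bary x d * (k * (((d : ℕ) : ℝ) - aX c) ^ 2)) = _
  have J1 : ∀ x : Fin M → ℝ, (∑ d : Fin (M + 1), bary x d * (k * (((d : ℕ) : ℝ) - c1) ^ 2)) *
      (C * ∏ d, bary x d ^ (α d - 1)) = (C * ∏ d, bary x d ^ (α d - 1)) *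
      (k * momentTwo (bary x) + 0 * momentOne (bary x) ^ 2 +
        -2 * k * c1 * momentOne (bary x) + k * c1 ^ 2) := by
    intro x
    rw [quadratic_risk (sum_bary x)]; ring
  have J2 : ∀ x : Fin M → ℝ, (C * ∏ d, bary x d ^ (α d - 1)) *
        ∑ c ∈ Finset.Nat.antidiagonalTuple (M + 1) n,
          ((Nat.multinomial Finset.univ c : ℝ) * ∏ d, bary x d ^ c d) *
            ∑ d : Fin (M + 1), bary x d * (k * (((d : ℕ) : ℝ) - aX c) ^ 2) =
      (C * ∏ d, bary x d ^ (α d - 1)) * (k * (1 + q ^ 2 * n) * momentTwo (bary x) +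
        k * (q ^ 2 * (n * (n - 1)) - 2 * q * n) * momentOne (bary x) ^ 2 +
        k * (2 * p * q * n - 2 * p) * momentOne (bary x) + k * p ^ 2) := by
    intro x
    simp only [hX]
    rw [multinomial_risk n (sum_bary x)]; ring
  simp only [J1, J2]
  rw [I1, I2, hp, hq]
  have : (n : ℝ) + A ≠ 0 := by positivity
  field_simp
  ring
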